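/- In the setting of the previous proposition (φ non-polynomial, analytic at 0 with nonnegative Taylor coefficients, satisfying E(x,φ(x)) = 0 for an irreducible E with real proper rational parametrization P = (x̂,ŷ), x̂(∞) = ∞, s₀ the real point parametrizing φ at 0, s_c the critical point and x_c = x̂(s_c) the dominant singularity of φ), assume additionally that s_c is the only critical point s of P with |x̂(s)| = x_c. Then there exists an open neighborhood V of s₀ with s_c ∈ ∂V and ε > 0 such that x̂ restricted to V is a conformal bijection from V onto the slit disk at x_c of margin ε, and φ admits an analytic continuation to this slit disk. -/

import Mathlib

open Polynomial

/-- A rational map of the Riemann sphere, given by a pair of coprime polynomials. -/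
structure RationalMap where
  num : Polynomial ℂ
  den : Polynomial ℂ
  den_ne_zero : den ≠ 0
  coprime : IsCoprime num den

namespace RationalMap

/-- The finite-valued function `s ↦ num(s)/den(s)` (junk value `0` at poles). -/
noncomputable def toFun (f : RationalMap) (s : ℂ) : ℂ := f.num.eval s / f.den.eval s

/-- Evaluation as a map to the Riemann sphere `ℂ ∪ {∞}`. -/
noncomputable def eval (f : RationalMap) (s : ℂ) : OnePoint ℂ :=
  if f.den.eval s = 0 then OnePoint.infty else ((f.toFun s : ℂ) : OnePoint ℂ)

/-- The value of the rational map at the point `∞` of the Riemann sphere. -/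
noncomputable def evalInf (f : RationalMap) : OnePoint ℂ :=
  if f.den.degree < f.num.degree then OnePoint.infty
  else ((f.num.coeff f.den.natDegree / f.den.leadingCoeff : ℂ) : OnePoint ℂ)

/-- A rational map is real if (after clearing a common constant) its numerator and
denominator can be written with real coefficients. -/
def IsReal (f : RationalMap) : Prop :=
  ∃ (c : ℂ) (P Q : Polynomial ℝ), c ≠ 0 ∧
    c • f.num = P.map (algebraMap ℝ ℂ) ∧ c • f.den = Q.map (algebraMap ℝ ℂ)

end RationalMap

/-- Evaluation of a bivariate polynomial `E` at `(x,y)`. -/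
noncomputable def evalE (E : MvPolynomial (Fin 2) ℂ) (x y : ℂ) : ℂ :=
  MvPolynomial.eval ![x, y] E

/-- `(X,Y)` is a rational parametrization of the curve `E(x,y) = 0`:
`E(X(s), Y(s)) = 0` for all but finitely many `s ∈ ℂ`. -/
def IsParametrization (E : MvPolynomial (Fin 2) ℂ) (X Y : RationalMap) : Prop :=
  Set.Finite {s : ℂ |
    ¬ (X.den.eval s ≠ 0 ∧ Y.den.eval s ≠ 0 ∧ evalE E (X.toFun s) (Y.toFun s) = 0)}

/-- The parametrization `(X,Y)` is proper: for all but finitely many points `(x,y)` on the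
curve, the equation `(X(s), Y(s)) = (x,y)` has exactly one solution `s ∈ ℂ`. -/
def IsProper (E : MvPolynomial (Fin 2) ℂ) (X Y : RationalMap) : Prop :=
  Set.Finite {P : ℂ × ℂ | evalE E P.1 P.2 = 0 ∧
    ¬ ∃! s : ℂ, X.eval s = ((P.1 : ℂ) : OnePoint ℂ) ∧ Y.eval s = ((P.2 : ℂ) : OnePoint ℂ)}

/-- `s` is a critical point of the parametrization `(X,Y)` if `X′(s) = 0` (as a rational
function, i.e. the numerator `num′·den − num·den′` of the derivative vanishes at `s`) or
`Y(s) = ∞`. -/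
def IsCriticalPt (X Y : RationalMap) (s : ℂ) : Prop :=
  (X.num.derivative * X.den - X.num * X.den.derivative).eval s = 0 ∨ Y.den.eval s = 0

/-- The slit disk at `x > 0` of margin `ε > 0`. -/
def slitDisk (x ε : ℝ) : Set ℂ :=
  Metric.ball (0 : ℂ) (x + ε) \ (Complex.ofReal '' Set.Icc x (x + ε))

open Filter Topology Metric

lemma eventually_nhdsNE_notMem_of_finite {α : Type*} [TopologicalSpace α] [T1Space α] {S : Set α}
    (hS : S.Finite) (a : α) : ∀ᶠ t in 𝓝[≠] a, t ∉ S := by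
  have h : (S \ {a})ᶜ ∈ 𝓝 a := hS.sdiff.isClosed.isOpen_compl.mem_nhds (by simp)
  filter_upwards [nhdsWithin_le_nhds h, self_mem_nhdsWithin] with t ht hta htS using ht ⟨htS, hta⟩

namespace RationalMap

variable (f : RationalMap)

lemma num_eval_ne_zero {s : ℂ} (hs : f.den.eval s = 0) : f.num.eval s ≠ 0 := by
  obtain ⟨a, b, hab⟩ := f.coprime
  intro hn
  have := congrArg (Polynomial.eval s) hab
  simp [hn, hs] at this

lemma eval_eq_coe_iff {s w : ℂ} :
    f.eval s = (w : OnePoint ℂ) ↔ f.den.eval s ≠ 0 ∧ f.toFun s = w := by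
  unfold eval
  split_ifs with h
  · simp [h, OnePoint.infty_ne_coe]
  · simp [h]

lemma degree_lt_of_evalInf (h : f.evalInf = OnePoint.infty) : f.den.degree < f.num.degree := by
  unfold evalInf at h
  split_ifs at h with h'
  · exact h'
  · exact absurd h (OnePoint.coe_ne_infty _)

lemma hasStrictDerivAt_toFun {s : ℂ} (hs : f.den.eval s ≠ 0) :
    HasStrictDerivAt f.toFun
      ((f.num.derivative * f.den - f.num * f.den.derivative).eval s / f.den.eval s ^ 2) s := by
  have := (f.num.hasStrictDerivAt s).fun_div (f.den.hasStrictDerivAt s) hs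
  simp only [eval_sub, eval_mul]
  exact this

lemma deriv_toFun {s : ℂ} (hs : f.den.eval s ≠ 0) :
    deriv f.toFun s =
      (f.num.derivative * f.den - f.num * f.den.derivative).eval s / f.den.eval s ^ 2 :=
  (f.hasStrictDerivAt_toFun hs).hasDerivAt.deriv

lemma deriv_toFun_ne_zero_iff {s : ℂ} (hs : f.den.eval s ≠ 0) :
    deriv f.toFun s ≠ 0 ↔
      (f.num.derivative * f.den - f.num * f.den.derivative).eval s ≠ 0 := by
  rw [f.deriv_toFun hs]
  simp [hs]

lemma isOpen_den_ne_zero : IsOpen {s : ℂ | f.den.eval s ≠ 0} :=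
  isOpen_ne_fun f.den.continuous continuous_const

lemma differentiableOn_toFun : DifferentiableOn ℂ f.toFun {s | f.den.eval s ≠ 0} := fun _ hs =>
  (f.hasStrictDerivAt_toFun hs).hasDerivAt.differentiableAt.differentiableWithinAt

lemma analyticAt_toFun {s : ℂ} (hs : f.den.eval s ≠ 0) : AnalyticAt ℂ f.toFun s :=
  f.differentiableOn_toFun.analyticAt (f.isOpen_den_ne_zero.mem_nhds hs)

lemma continuousAt_toFun {s : ℂ} (hs : f.den.eval s ≠ 0) : ContinuousAt f.toFun s :=
  (f.analyticAt_toFun hs).continuousAt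

lemma isOpen_preimage {U : Set ℂ} (hU : IsOpen U) :
    IsOpen {s : ℂ | f.den.eval s ≠ 0 ∧ f.toFun s ∈ U} :=
  f.differentiableOn_toFun.continuousOn.isOpen_inter_preimage f.isOpen_den_ne_zero hU

section Proper

variable {f}

lemma isCompact_preimage (hdeg : f.den.degree < f.num.degree) {K : Set ℂ} (hK : IsCompact K) :
    IsCompact {s : ℂ | f.den.eval s ≠ 0 ∧ f.toFun s ∈ K} := by
  have hset : {s : ℂ | f.den.eval s ≠ 0 ∧ f.toFun s ∈ K} =
      {s : ℂ | ∃ w ∈ K, f.num.eval s = w * f.den.eval s} := by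
    ext s
    constructor
    · rintro ⟨h1, h2⟩
      exact ⟨_, h2, by simp [toFun, h1]⟩
    · rintro ⟨w, hw, h⟩
      have hd : f.den.eval s ≠ 0 := fun h0 => f.num_eval_ne_zero h0 (by simp [h, h0])
      refine ⟨hd, ?_⟩
      simpa [toFun, h, hd] using hw
  rw [hset, isCompact_iff_isClosed_bounded]
  constructor
  · refine isClosed_of_closure_subset fun s hs => ?_
    obtain ⟨u, hu, hus⟩ := mem_closure_iff_seq_limit.1 hs
    choose w hwK hw using hu
    obtain ⟨w₀, hw₀, ψ, hψ, hlim⟩ := hK.tendsto_subseq hwK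
    refine ⟨w₀, hw₀, ?_⟩
    have h1 := (f.num.continuous.tendsto s).comp (hus.comp hψ.tendsto_atTop)
    have h2 := hlim.mul ((f.den.continuous.tendsto s).comp (hus.comp hψ.tendsto_atTop))
    refine tendsto_nhds_unique h1 (h2.congr fun n => ?_)
    simp [hw]
  · obtain ⟨M, hM⟩ := hK.isBounded.exists_norm_le
    have hlo := Polynomial.isLittleO_cobounded_of_degree_lt hdeg
    have h1 := hlo.def (show (0 : ℝ) < 1 / (|M| + 1) by positivity)
    have h2 : ∀ᶠ s in Bornology.cobounded ℂ, f.num.eval s ≠ 0 := by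
      have hn : f.num ≠ 0 := Polynomial.ne_zero_of_degree_gt hdeg
      have : (f.num.rootSet ℂ).Finite := Polynomial.rootSet_finite _ _
      filter_upwards [Bornology.isBounded_def.1 this.isBounded] with s hs h0
      exact hs (by simp [Polynomial.mem_rootSet, hn, h0])
    rw [Bornology.isBounded_def]
    filter_upwards [h1, h2] with s hs1 hs2
    rintro ⟨w, hw, h⟩
    have hwM : ‖w‖ ≤ |M| := (hM w hw).trans (le_abs_self M)
    have hnum : ‖f.num.eval s‖ = ‖w‖ * ‖f.den.eval s‖ := by rw [h, norm_mul]
    have hpos : 0 < ‖f.num.eval s‖ := norm_pos_iff.2 hs2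
    have hM1 : (0 : ℝ) < |M| + 1 := by positivity
    rw [div_mul_eq_mul_div, one_mul, le_div_iff₀ hM1] at hs1
    nlinarith [norm_nonneg w, norm_nonneg (f.den.eval s)]

lemma finite_fiber (hdeg : f.den.degree < f.num.degree) (w : ℂ) :
    {s : ℂ | f.den.eval s ≠ 0 ∧ f.toFun s = w}.Finite := by
  have hp : f.num - C w * f.den ≠ 0 := by
    intro h
    have h2 : (C w * f.den).degree < f.num.degree :=
      lt_of_le_of_lt (by rw [← smul_eq_C_mul]; exact degree_smul_le _ _) hdeg
    rw [sub_eq_zero.1 h] at h2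
    exact lt_irrefl _ h2
  refine (Polynomial.rootSet_finite (f.num - C w * f.den) ℂ).subset ?_
  rintro s ⟨h1, rfl⟩
  refine Polynomial.mem_rootSet.2 ⟨hp, ?_⟩
  simp [toFun, h1]

lemma eventually_ne (hdeg : f.den.degree < f.num.degree) {s : ℂ} (hs : f.den.eval s ≠ 0) (w : ℂ) :
    ∀ᶠ t in 𝓝[≠] s, f.toFun t ≠ w := by
  have h1 : ∀ᶠ t in 𝓝[≠] s, t ∉ {s : ℂ | f.den.eval s ≠ 0 ∧ f.toFun s = w} :=
    eventually_nhdsNE_notMem_of_finite (finite_fiber hdeg w) s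
  have h2 : ∀ᶠ t in 𝓝[≠] s, f.den.eval t ≠ 0 :=
    nhdsWithin_le_nhds (f.isOpen_den_ne_zero.mem_nhds hs)
  filter_upwards [h1, h2] with t ht1 ht2 h using ht1 ⟨ht2, h⟩

lemma nhds_le_map_toFun (hdeg : f.den.degree < f.num.degree) {s : ℂ} (hs : f.den.eval s ≠ 0) :
    𝓝 (f.toFun s) ≤ map f.toFun (𝓝 s) := by
  refine (f.analyticAt_toFun hs).eventually_constant_or_nhds_le_map_nhds.resolve_left fun h => ?_
  obtain ⟨t, ht1, ht2⟩ :=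
    ((h.filter_mono nhdsWithin_le_nhds).and (eventually_ne hdeg hs (f.toFun s))).exists
  exact ht2 ht1

lemma wronskian_ne_zero (hdeg : f.den.degree < f.num.degree) :
    f.num.derivative * f.den - f.num * f.den.derivative ≠ 0 := by
  intro h
  obtain ⟨s, hs⟩ : ∃ s, f.den.eval s ≠ 0 := by
    by_contra! hcon
    exact f.den_ne_zero (Polynomial.funext (by simpa using hcon))
  have hev : ∀ᶠ t in 𝓝 s, deriv f.toFun t = 0 := by
    filter_upwards [f.isOpen_den_ne_zero.mem_nhds hs] with t ht
    rw [f.deriv_toFun ht, h]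
    simp
  obtain ⟨δ, hδ, hball⟩ := Metric.eventually_nhds_iff_ball.1
    (hev.and (f.isOpen_den_ne_zero.mem_nhds hs))
  have hconst : ∀ t ∈ ball s δ, f.toFun t = f.toFun s := fun t ht =>
    (isOpen_ball).is_const_of_deriv_eq_zero (convex_ball s δ).isPreconnected
      (f.differentiableOn_toFun.mono fun t ht => (hball t ht).2) (fun t ht => (hball t ht).1)
      ht (mem_ball_self hδ)
  obtain ⟨t, ht1, ht2⟩ := ((eventually_ne hdeg hs (f.toFun s)).and
    (nhdsWithin_le_nhds (ball_mem_nhds s hδ))).exists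
  exact ht1 (hconst t ht2)

lemma isClosedMap_restrict (hdeg : f.den.degree < f.num.degree) :
    IsClosedMap fun s : {s : ℂ // f.den.eval s ≠ 0} => f.toFun s := by
  have hcont : Continuous fun s : {s : ℂ // f.den.eval s ≠ 0} => f.toFun s :=
    f.differentiableOn_toFun.continuousOn.domRestrict
  refine (isProperMap_iff_isCompact_preimage.2 ⟨hcont, fun K hK => ?_⟩).isClosedMap
  rw [Subtype.isCompact_iff]
  convert isCompact_preimage hdeg hK using 1
  ext s
  simp [and_comm]

/-- A rational map sending `∞` to `∞` is a covering over the set of its finite regular values. -/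
lemma isCoveringMapOn_restrict (hdeg : f.den.degree < f.num.degree) :
    IsCoveringMapOn (fun s : {s : ℂ // f.den.eval s ≠ 0} => f.toFun s)
      {w | ∀ s, f.den.eval s ≠ 0 → f.toFun s = w → deriv f.toFun s ≠ 0} := by
  refine (isClosedMap_restrict hdeg).isCoveringMapOn_of_isLocalHomeomorphOn (fun w _ => ?_) ?_
  · refine Set.Finite.of_finite_image (f := Subtype.val) ((finite_fiber hdeg w).subset ?_)
      Subtype.val_injective.injOn
    rintro _ ⟨s, hs, rfl⟩
    exact ⟨s.2, hs⟩
  · rintro s hs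
    have hne := hs s s.2 rfl
    have hd := f.hasStrictDerivAt_toFun s.2
    rw [f.deriv_toFun s.2] at hne
    let e : OpenPartialHomeomorph ℂ ℂ :=
      (hd.hasStrictFDerivAt_equiv hne).toOpenPartialHomeomorph f.toFun
    have : Nonempty {s : ℂ // f.den.eval s ≠ 0} := ⟨s⟩
    let i : OpenPartialHomeomorph {s : ℂ // f.den.eval s ≠ 0} ℂ :=
      f.isOpen_den_ne_zero.isOpenEmbedding_subtypeVal.toOpenPartialHomeomorph Subtype.val
    refine ⟨i.trans e, ?_, ?_⟩
    · rw [OpenPartialHomeomorph.trans_source]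
      refine ⟨by simp [i], ?_⟩
      exact (hd.hasStrictFDerivAt_equiv hne).mem_toOpenPartialHomeomorph_source
    · ext t
      simp [i, e]

end Proper

end RationalMap

section Pringsheim

open scoped ComplexOrder Nat

/-- The sum of the complex power series with real coefficients `c`. -/
noncomputable def powerSum (c : ℕ → ℝ) (z : ℂ) : ℂ := ∑' n, (c n : ℂ) * z ^ n

variable {c : ℕ → ℝ} {R : ℝ}

lemma summable_mul_pow_of_le (hc : ∀ n, 0 ≤ c n) {x y : ℝ} (hx : 0 ≤ x) (hxy : x ≤ y)
    (hy : Summable fun n => c n * y ^ n) : Summable fun n => c n * x ^ n :=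
  hy.of_nonneg_of_le (fun n => mul_nonneg (hc n) (pow_nonneg hx n)) fun n =>
    mul_le_mul_of_nonneg_left (pow_le_pow_left₀ hx hxy n) (hc n)

lemma hasSum_powerSum (hc : ∀ n, 0 ≤ c n) {z : ℂ} (hz : Summable fun n => c n * ‖z‖ ^ n) :
    HasSum (fun n => (c n : ℂ) * z ^ n) (powerSum c z) := by
  refine (Summable.of_norm ?_).hasSum
  simpa [abs_of_nonneg (hc _)] using hz

lemma differentiableOn_powerSum (hc : ∀ n, 0 ≤ c n)
    (hsum : ∀ x, 0 ≤ x → x < R → Summable fun n => c n * x ^ n) :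
    DifferentiableOn ℂ (powerSum c) (ball 0 R) := by
  intro z hz
  obtain ⟨x, hzx, hxR⟩ := exists_between (mem_ball_zero_iff.1 hz)
  have hx : 0 ≤ x := (norm_nonneg z).trans hzx.le
  refine DifferentiableAt.differentiableWithinAt ?_
  refine (Complex.differentiableOn_tsum_of_summable_norm (u := fun n => c n * x ^ n)
    (hsum x hx hxR) (fun n => by fun_prop) isOpen_ball (fun n w hw => ?_) :
    DifferentiableOn ℂ (powerSum c) (ball 0 x)).differentiableAt
    (isOpen_ball.mem_nhds (mem_ball_zero_iff.2 hzx))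
  rw [norm_mul, norm_pow, Complex.norm_real, Real.norm_of_nonneg (hc n)]
  gcongr
  · exact hc n
  · exact (mem_ball_zero_iff.1 hw).le

lemma iteratedDeriv_powerSum_zero (hc : ∀ n, 0 ≤ c n) (hR : 0 < R)
    (hsum : ∀ x, 0 ≤ x → x < R → Summable fun n => c n * x ^ n) (n : ℕ) :
    iteratedDeriv n (powerSum c) 0 = (n ! : ℂ) * c n := by
  have han : AnalyticAt ℂ (powerSum c) 0 :=
    (differentiableOn_powerSum hc hsum).analyticAt (ball_mem_nhds 0 hR)
  have h2 : HasFPowerSeriesAt (powerSum c)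
      (FormalMultilinearSeries.ofScalars ℂ fun n => (c n : ℂ)) 0 := by
    rw [hasFPowerSeriesAt_iff]
    filter_upwards [ball_mem_nhds (0 : ℂ) hR] with z hz
    have := hasSum_powerSum hc (hsum ‖z‖ (norm_nonneg z) (mem_ball_zero_iff.1 hz))
    simpa [FormalMultilinearSeries.coeff_ofScalars, mul_comm] using this
  have h3 := congrArg (fun p => FormalMultilinearSeries.coeff p n)
    (han.hasFPowerSeriesAt.eq_formalMultilinearSeries h2)
  simp only [FormalMultilinearSeries.coeff_ofScalars] at h3
  have : (n ! : ℂ) ≠ 0 := by exact_mod_cast n.factorial_ne_zero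
  field_simp at h3
  rw [h3, mul_comm]

lemma iteratedDeriv_nonneg_of_zero {f : ℂ → ℂ} (hf : DifferentiableOn ℂ f (ball 0 R))
    (h : ∀ n, 0 ≤ iteratedDeriv n f 0) {a : ℝ} (ha : 0 ≤ a) (haR : a < R) (m : ℕ) :
    0 ≤ iteratedDeriv m f a := by
  have hd : DifferentiableOn ℂ (iteratedDeriv m f) (ball 0 R) := by
    rw [iteratedDeriv_eq_iterate]
    exact ((hf.analyticOnNhd isOpen_ball).iterated_deriv m).differentiableOn
  refine hd.nonneg_of_iteratedDeriv_nonneg (fun n => ?_) (by exact_mod_cast ha) ?_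
  · have := h (n + m)
    rw [iteratedDeriv_eq_iterate, Function.iterate_add_apply] at this
    rwa [iteratedDeriv_eq_iterate, iteratedDeriv_eq_iterate]
  · simpa [abs_of_nonneg ha] using haR

lemma powerSum_indicator (N : ℕ) (z : ℂ) :
    powerSum (fun n => if n < N then c n else 0) z =
      ∑ n ∈ Finset.range N, (c n : ℂ) * z ^ n := by
  unfold powerSum
  rw [tsum_eq_sum (s := Finset.range N)]
  · exact Finset.sum_congr rfl fun n hn => by simp [Finset.mem_range.1 hn]
  · intro n hn
    have : ¬ n < N := by simpa using hn
    simp [this]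

/-- **Pringsheim's theorem**: a power series with nonnegative coefficients whose sum continues
analytically past the point `R` converges beyond `R`. -/
lemma exists_summable_of_analyticAt (hc : ∀ n, 0 ≤ c n) (hR : 0 < R)
    (hsum : ∀ x, 0 ≤ x → x < R → Summable fun n => c n * x ^ n) {G : ℂ → ℂ}
    (hG : AnalyticAt ℂ G R)
    (heq : ∃ᶠ a : ℝ in 𝓝[<] R, G =ᶠ[𝓝 (a : ℂ)] powerSum c) :
    ∃ R' > R, Summable fun n => c n * R' ^ n := by
  obtain ⟨δ, hδ, hball⟩ := Metric.eventually_nhds_iff_ball.1 hG.eventually_analyticAt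
  have hev : ∀ᶠ a : ℝ in 𝓝[<] R, 0 < a ∧ R - δ / 3 < a ∧ a < R :=
    ((eventually_gt_nhds hR).filter_mono nhdsWithin_le_nhds).and
      (((eventually_gt_nhds (by linarith)).filter_mono nhdsWithin_le_nhds).and
        self_mem_nhdsWithin)
  obtain ⟨a, hGa, ha0, ha1, haR⟩ := (heq.and_eventually hev).exists
  refine ⟨R + δ / 6, by linarith, ?_⟩
  set R' : ℝ := R + δ / 6 with hR'
  have hsub : ball (a : ℂ) (2 * δ / 3) ⊆ ball (R : ℂ) δ := by
    refine ball_subset_ball' ?_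
    rw [dist_comm, Complex.dist_eq, ← Complex.ofReal_sub, Complex.norm_real,
      Real.norm_of_nonneg (by linarith)]
    linarith
  have hmem : (R' : ℂ) ∈ ball (a : ℂ) (2 * δ / 3) := by
    rw [mem_ball, Complex.dist_eq, ← Complex.ofReal_sub, Complex.norm_real,
      Real.norm_of_nonneg (by linarith)]
    linarith
  have hGd : DifferentiableOn ℂ G (ball (a : ℂ) (2 * δ / 3)) := fun z hz =>
    (hball z (hsub hz)).differentiableAt.differentiableWithinAt
  have hGT := Complex.hasSum_taylorSeries_on_ball hGd hmem
  have hFd := differentiableOn_powerSum hc hsum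
  have hpow (n : ℕ) : 0 ≤ (((n ! : ℂ))⁻¹ * ((R' : ℂ) - a) ^ n) := by
    have h : (0 : ℝ) ≤ ((n ! : ℝ))⁻¹ * (R' - a) ^ n :=
      mul_nonneg (by positivity) (pow_nonneg (by linarith) n)
    have h' := Complex.zero_le_real.2 h
    push_cast at h'
    exact h'
  have hmema : (a : ℂ) ∈ ball (0 : ℂ) R := by simpa [abs_of_pos ha0] using haR
  refine summable_of_sum_range_le (c := (G R').re)
    (fun n => mul_nonneg (hc n) (pow_nonneg (by linarith) n)) fun N => ?_
  set d : ℕ → ℝ := fun n => if n < N then c n else 0 with hd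
  have hdpos : ∀ n, 0 ≤ d n := fun n => by
    simp only [hd]; split_ifs <;> simp [hc n]
  have hdsum : ∀ x : ℝ, Summable fun n => d n * x ^ n := fun x =>
    summable_of_ne_finset_zero (s := Finset.range N) fun n hn => by
      have : ¬ n < N := by simpa using hn
      simp [hd, this]
  have hdd : ∀ ρ : ℝ, DifferentiableOn ℂ (powerSum d) (ball 0 ρ) := fun ρ =>
    differentiableOn_powerSum hdpos fun x _ _ => hdsum x
  have hddiff : Differentiable ℂ (powerSum d) := fun z =>
    (hdd (‖z‖ + 1)).differentiableAt (isOpen_ball.mem_nhds (by simp))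
  have hdT := Complex.hasSum_taylorSeries_on_ball hddiff.differentiableOn hmem
  have hsubd (x : ℂ) (hx : x ∈ ball (0 : ℂ) R) (n : ℕ) :
      iteratedDeriv n (fun z => powerSum c z - powerSum d z) x =
        iteratedDeriv n (powerSum c) x - iteratedDeriv n (powerSum d) x :=
    iteratedDeriv_fun_sub (hFd.analyticAt (isOpen_ball.mem_nhds hx)).contDiffAt
      (hddiff.analyticAt x).contDiffAt
  have hle (n : ℕ) : iteratedDeriv n (powerSum d) a ≤ iteratedDeriv n G a := by
    rw [hGa.iteratedDeriv_eq n, ← sub_nonneg, ← hsubd a hmema]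
    refine iteratedDeriv_nonneg_of_zero (hFd.fun_sub (hdd R)) (fun m => ?_) ha0.le haR n
    rw [hsubd 0 (mem_ball_self hR), iteratedDeriv_powerSum_zero hc hR hsum,
      iteratedDeriv_powerSum_zero hdpos hR fun x _ _ => hdsum x, ← mul_sub]
    have h : (0 : ℝ) ≤ (m ! : ℝ) * (c m - d m) := by
      refine mul_nonneg (by positivity) ?_
      simp only [hd]
      split_ifs <;> simp [hc m]
    exact_mod_cast h
  have hfin := hasSum_le (fun n => ?_) hdT hGT
  · have h2 := (Complex.le_def.1 hfin).1
    rw [powerSum_indicator] at h2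
    refine le_of_eq_of_le ?_ h2
    norm_cast
  · rw [smul_eq_mul, smul_eq_mul, smul_eq_mul, smul_eq_mul, ← mul_assoc, ← mul_assoc]
    exact mul_le_mul_of_nonneg_left (hle n) (hpow n)

end Pringsheim

section InverseFunction

open Function Set

variable {f : ℂ → ℂ} {V : Set ℂ}

lemma invFunOn_apply_of_injOn (hinj : InjOn f V) {t : ℂ} (ht : t ∈ V) :
    invFunOn f V (f t) = t :=
  hinj (invFunOn_mem ⟨t, ht, rfl⟩) ht (invFunOn_eq ⟨t, ht, rfl⟩)

lemma differentiableAt_invFunOn (hV : IsOpen V) (hf : DifferentiableOn ℂ f V) (hinj : InjOn f V)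
    {z : ℂ} (hz : z ∈ V) (hd : deriv f z ≠ 0) : DifferentiableAt ℂ (invFunOn f V) (f z) := by
  have hs : HasStrictDerivAt f (deriv f z) z :=
    (hf.analyticAt (hV.mem_nhds hz)).hasStrictDerivAt
  have hL := hs.to_localInverse hd
  refine (hL.hasDerivAt.congr_of_eventuallyEq ?_).differentiableAt
  have h1 := (hs.hasStrictFDerivAt_equiv hd).eventually_right_inverse
  have h2 := (hs.hasStrictFDerivAt_equiv hd).localInverse_tendsto (hV.mem_nhds hz)
  filter_upwards [h1, h2] with w hw1 hw2
  have h := invFunOn_apply_of_injOn hinj hw2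
  rwa [hw1] at h

lemma not_eventually_const_of_injOn (hV : IsOpen V) (hinj : InjOn f V) {z : ℂ} (hz : z ∈ V) :
    ¬ ∀ᶠ t in 𝓝 z, f t = f z := by
  intro h
  obtain ⟨t, ⟨ht1, ht2⟩, ht3⟩ := (((h.and (hV.mem_nhds hz)).filter_mono
    nhdsWithin_le_nhds).and (self_mem_nhdsWithin : ∀ᶠ t in 𝓝[≠] z, t ∈ ({z} : Set ℂ)ᶜ)).exists
  exact ht3 (hinj ht2 hz ht1)

/-- An injective holomorphic function on an open set has nonvanishing derivative. -/
lemma deriv_ne_zero_of_injOn (hV : IsOpen V) (hf : DifferentiableOn ℂ f V) (hinj : InjOn f V)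
    {z : ℂ} (hz : z ∈ V) : deriv f z ≠ 0 := by
  have han : AnalyticAt ℂ f z := hf.analyticAt (hV.mem_nhds hz)
  have hopen : 𝓝 (f z) ≤ map f (𝓝 z) := han.eventually_constant_or_nhds_le_map_nhds.resolve_left
    (not_eventually_const_of_injOn hV hinj hz)
  have hcont : ContinuousAt (invFunOn f V) (f z) := by
    intro U hU
    rw [invFunOn_apply_of_injOn hinj hz] at hU
    have : f '' (U ∩ V) ∈ 𝓝 (f z) :=
      hopen (mem_map.2 (mem_of_superset (inter_mem hU (hV.mem_nhds hz))
        (subset_preimage_image _ _)))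
    refine mem_map.2 (mem_of_superset this ?_)
    rintro _ ⟨t, ⟨htU, htV⟩, rfl⟩
    simpa [invFunOn_apply_of_injOn hinj htV] using htU
  have hdne : ∀ᶠ t in 𝓝[≠] z, deriv f t ≠ 0 := by
    refine han.deriv.eventually_eq_zero_or_eventually_ne_zero.resolve_left fun h => ?_
    obtain ⟨δ, hδ, hball⟩ := Metric.eventually_nhds_iff_ball.1 (h.and (hV.mem_nhds hz))
    refine not_eventually_const_of_injOn hV hinj hz ?_
    filter_upwards [ball_mem_nhds z hδ] with t ht
    exact isOpen_ball.is_const_of_deriv_eq_zero (convex_ball z δ).isPreconnected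
      (hf.mono fun t ht => (hball t ht).2) (fun t ht => (hball t ht).1) ht (mem_ball_self hδ)
  have hdiff : ∀ᶠ w in 𝓝[≠] (f z), DifferentiableAt ℂ (invFunOn f V) w := by
    rw [eventually_nhdsWithin_iff] at hdne ⊢
    have hmem := inter_mem hdne (hV.mem_nhds hz)
    have := hopen (mem_map.2 (mem_of_superset hmem (subset_preimage_image f _)))
    filter_upwards [this]
    rintro _ ⟨t, ⟨ht1, htV⟩, rfl⟩ hne
    exact differentiableAt_invFunOn hV hf hinj htV (ht1 fun h => hne (by rw [h]; rfl))
  have hτ := (Complex.analyticAt_of_differentiable_on_punctured_nhds_of_continuousAt hdiff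
    hcont).differentiableAt
  have hid : (fun w => f (invFunOn f V w)) =ᶠ[𝓝 (f z)] id := by
    have := hopen (mem_map.2 (mem_of_superset (hV.mem_nhds hz) (subset_preimage_image f _)))
    filter_upwards [this]
    rintro w ⟨t, ht, rfl⟩
    exact invFunOn_eq ⟨t, ht, rfl⟩
  have hz' : HasDerivAt f (deriv f z) (invFunOn f V (f z)) := by
    rw [invFunOn_apply_of_injOn hinj hz]
    exact han.differentiableAt.hasDerivAt
  have hcomp := hz'.comp (f z) hτ.hasDerivAt
  have := (hcomp.congr_of_eventuallyEq (EventuallyEq.symm hid)).unique (hasDerivAt_id (f z))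
  intro h0
  simp [h0] at this

end InverseFunction

section RealLine

open Set

variable {X : RationalMap}

/-- The restriction of a real rational map to the real line. -/
noncomputable def RationalMap.realFun (X : RationalMap) (s : ℝ) : ℝ := (X.toFun (s : ℂ)).re

lemma RationalMap.IsReal.toFun_ofReal (hX : X.IsReal) (s : ℝ) :
    X.toFun (s : ℂ) = (X.realFun s : ℂ) := by
  obtain ⟨k, P, Q, hk, hP, hQ⟩ := hX
  have h : X.toFun (s : ℂ) = ((P.eval s / Q.eval s : ℝ) : ℂ) := by
    have h1 := congrArg (Polynomial.eval (s : ℂ)) hP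
    have h2 := congrArg (Polynomial.eval (s : ℂ)) hQ
    rw [Polynomial.eval_smul, smul_eq_mul] at h1 h2
    have e1 : (P.map (algebraMap ℝ ℂ)).eval (s : ℂ) = ((P.eval s : ℝ) : ℂ) :=
      Polynomial.eval_map_apply (algebraMap ℝ ℂ) s
    have e2 : (Q.map (algebraMap ℝ ℂ)).eval (s : ℂ) = ((Q.eval s : ℝ) : ℂ) :=
      Polynomial.eval_map_apply (algebraMap ℝ ℂ) s
    rw [Complex.ofReal_div, ← e1, ← e2, ← h1, ← h2, mul_div_mul_left _ _ hk, RationalMap.toFun]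
  rw [RationalMap.realFun, h, Complex.ofReal_re]

lemma RationalMap.hasDerivAt_realFun {s : ℝ} (hs : X.den.eval (s : ℂ) ≠ 0) :
    HasDerivAt X.realFun (deriv X.toFun (s : ℂ)).re s :=
  (X.analyticAt_toFun hs).differentiableAt.hasDerivAt.real_of_complex

lemma RationalMap.IsReal.deriv_toFun_ofReal (hX : X.IsReal) {s : ℝ}
    (hs : X.den.eval (s : ℂ) ≠ 0) :
    deriv X.toFun (s : ℂ) = ((deriv X.toFun (s : ℂ)).re : ℂ) := by
  have h1 := (X.hasDerivAt_realFun hs).ofReal_comp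
  have h2 := (X.analyticAt_toFun hs).differentiableAt.hasDerivAt.comp_ofReal
  exact (h2.congr_of_eventuallyEq (.of_forall fun t => (hX.toFun_ofReal t).symm)).unique h1

/-- If a real rational map has positive derivative at `s₀` and no pole and no critical point on
`[s₀, s₁)`, it is strictly increasing there. -/
lemma RationalMap.IsReal.strictMonoOn (hX : X.IsReal) {s₀ s₁ : ℝ}
    (hden : ∀ s ∈ Ico s₀ s₁, X.den.eval (s : ℂ) ≠ 0)
    (hcrit : ∀ s ∈ Ico s₀ s₁, deriv X.toFun (s : ℂ) ≠ 0)
    (hpos : 0 < (deriv X.toFun (s₀ : ℂ)).re) : StrictMonoOn X.realFun (Ico s₀ s₁) := by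
  have hcont : ContinuousOn X.realFun (Ico s₀ s₁) := fun s hs =>
    (X.hasDerivAt_realFun (hden s hs)).continuousAt.continuousWithinAt
  have hdcont : ContinuousOn (fun s : ℝ => (deriv X.toFun (s : ℂ)).re) (Ico s₀ s₁) := fun s hs =>
    (Complex.continuous_re.continuousAt.comp
      ((X.analyticAt_toFun (hden s hs)).deriv.continuousAt.comp
        Complex.continuous_ofReal.continuousAt)).continuousWithinAt
  refine strictMonoOn_of_deriv_pos (convex_Ico s₀ s₁) hcont fun s hs => ?_
  have hs := interior_subset hs
  rw [(X.hasDerivAt_realFun (hden s hs)).deriv]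
  by_contra! hle
  have hsub : Icc s₀ s ⊆ Ico s₀ s₁ := fun t ht => ⟨ht.1, ht.2.trans_lt hs.2⟩
  obtain ⟨t, ht, ht0⟩ := intermediate_value_Icc' hs.1 (hdcont.mono hsub) ⟨hle, hpos.le⟩
  refine hcrit t (hsub ht) ?_
  rw [hX.deriv_toFun_ofReal (hden t (hsub ht))]
  exact_mod_cast ht0

end RealLine

section Sheet

open Set

variable {X Y : RationalMap} {c : ℕ → ℝ} {s₀ : ℝ} {R : ℝ}

/-- The component containing `s₀` of the set where `|X| < R`. -/
def sheet (X : RationalMap) (s₀ R : ℝ) : Set ℂ :=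
  connectedComponentIn {s : ℂ | X.den.eval s ≠ 0 ∧ X.toFun s ∈ ball 0 R} s₀

lemma sheet_subset : sheet X s₀ R ⊆ {s : ℂ | X.den.eval s ≠ 0 ∧ X.toFun s ∈ ball 0 R} :=
  connectedComponentIn_subset _ _

lemma isOpen_sheet : IsOpen (sheet X s₀ R) :=
  (X.isOpen_preimage isOpen_ball).connectedComponentIn

lemma isPreconnected_sheet : IsPreconnected (sheet X s₀ R) :=
  isPreconnected_connectedComponentIn

lemma self_mem_sheet (hden : X.den.eval (s₀ : ℂ) ≠ 0) (hX0 : X.toFun (s₀ : ℂ) = 0) (hR : 0 < R) :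
    (s₀ : ℂ) ∈ sheet X s₀ R :=
  mem_connectedComponentIn ⟨hden, by simpa [hX0] using hR⟩

lemma subset_sheet_of_isPreconnected {A : Set ℂ} (hA : IsPreconnected A)
    (hsub : ∀ s ∈ A, X.den.eval s ≠ 0 ∧ X.toFun s ∈ ball 0 R) (hne : (A ∩ sheet X s₀ R).Nonempty) :
    A ⊆ sheet X s₀ R := by
  obtain ⟨t, htA, ht⟩ := hne
  unfold sheet at ht ⊢
  rw [connectedComponentIn_eq ht]
  exact hA.subset_connectedComponentIn htA hsub

lemma sheet_identity (hc : ∀ n, 0 ≤ c n)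
    (hsum : ∀ x, 0 ≤ x → x < R → Summable fun n => c n * x ^ n) (hR : 0 < R)
    (hden : X.den.eval (s₀ : ℂ) ≠ 0) (hX0 : X.toFun (s₀ : ℂ) = 0)
    (hloc : ∀ᶠ t in 𝓝 (s₀ : ℂ), Y.den.eval t ≠ 0 ∧ Y.toFun t = powerSum c (X.toFun t))
    {t : ℂ} (ht : t ∈ sheet X s₀ R) :
    Y.den.eval t ≠ 0 ∧ Y.toFun t = powerSum c (X.toFun t) := by
  have hF := differentiableOn_powerSum hc hsum
  have h1 : AnalyticOnNhd ℂ (fun t => Y.num.eval t) (sheet X s₀ R) := fun t _ =>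
    Y.num.differentiable.analyticAt t
  have h2 : AnalyticOnNhd ℂ (fun t => Y.den.eval t * powerSum c (X.toFun t)) (sheet X s₀ R) :=
    fun t ht => (Y.den.differentiable.analyticAt t).mul
      ((hF.analyticAt (isOpen_ball.mem_nhds (sheet_subset ht).2)).comp
        (X.analyticAt_toFun (sheet_subset ht).1))
  have h3 := h1.eqOn_of_preconnected_of_eventuallyEq h2 isPreconnected_sheet
    (self_mem_sheet hden hX0 hR) (by
      filter_upwards [hloc] with t ht
      rw [← ht.2, RationalMap.toFun, mul_div_cancel₀ _ ht.1]) ht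
  have hY : Y.den.eval t ≠ 0 := fun h0 => Y.num_eval_ne_zero h0 (by simpa [h0] using h3)
  refine ⟨hY, ?_⟩
  rw [RationalMap.toFun, div_eq_iff hY, mul_comm]
  exact h3

lemma image_sheet (hdeg : X.den.degree < X.num.degree) (hR : 0 < R)
    (hden : X.den.eval (s₀ : ℂ) ≠ 0) (hX0 : X.toFun (s₀ : ℂ) = 0) :
    X.toFun '' sheet X s₀ R = ball 0 R := by
  refine Subset.antisymm (by rintro _ ⟨s, hs, rfl⟩; exact (sheet_subset hs).2) ?_
  have hopen : IsOpen (X.toFun '' sheet X s₀ R) := by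
    rw [isOpen_iff_mem_nhds]
    rintro _ ⟨s, hs, rfl⟩
    exact RationalMap.nhds_le_map_toFun hdeg (sheet_subset hs).1
      (mem_map.2 (mem_of_superset (isOpen_sheet.mem_nhds hs) (subset_preimage_image _ _)))
  refine (convex_ball (0 : ℂ) R).isPreconnected.subset_of_closure_inter_subset hopen
    ⟨0, mem_ball_self hR, s₀, self_mem_sheet hden hX0 hR, hX0⟩ ?_
  rintro w ⟨hw, hwR⟩
  obtain ⟨u, hu, huw⟩ := mem_closure_iff_seq_limit.1 hw
  choose s hs hsu using hu
  have hK := RationalMap.isCompact_preimage hdeg (huw.isCompact_insert_range)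
  obtain ⟨t, ht, ψ, hψ, hlim⟩ := hK.tendsto_subseq (x := s) fun n =>
    ⟨(sheet_subset (hs n)).1, by rw [hsu]; exact mem_insert_of_mem _ (mem_range_self n)⟩
  have hXt : X.toFun t = w := by
    refine tendsto_nhds_unique ((X.continuousAt_toFun ht.1).tendsto.comp hlim) ?_
    refine (huw.comp hψ.tendsto_atTop).congr fun n => ?_
    simp [hsu]
  refine ⟨t, ?_, hXt⟩
  have hconn : IsPreconnected (insert t (sheet X s₀ R)) :=
    isPreconnected_sheet.subset_closure (subset_insert _ _)
      (insert_subset (mem_closure_of_tendsto hlim (.of_forall fun n => hs _)) subset_closure)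
  refine subset_sheet_of_isPreconnected hconn ?_
    ⟨s₀, mem_insert_of_mem _ (self_mem_sheet hden hX0 hR), self_mem_sheet hden hX0 hR⟩
    (mem_insert _ _)
  rintro s (rfl | hs)
  · exact ⟨ht.1, by rwa [hXt]⟩
  · exact sheet_subset hs

lemma injOn_sheet {E : MvPolynomial (Fin 2) ℂ} (hpar : IsParametrization E X Y)
    (hprop : IsProper E X Y) (hdeg : X.den.degree < X.num.degree) {F : ℂ → ℂ}
    (hY : ∀ t ∈ sheet X s₀ R, Y.den.eval t ≠ 0 ∧ Y.toFun t = F (X.toFun t)) :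
    InjOn X.toFun (sheet X s₀ R) := by
  intro s hs s' hs' heq
  by_contra hne
  obtain ⟨U, U', hU, hU', hsU, hsU', hdisj⟩ := t2_separation hne
  have h1 : ∀ᶠ t in 𝓝[≠] s, ∃ t' ∈ U' ∩ sheet X s₀ R, X.toFun t' = X.toFun t := by
    have hmem : U' ∩ sheet X s₀ R ∈ 𝓝 s' := (hU'.inter isOpen_sheet).mem_nhds ⟨hsU', hs'⟩
    have := RationalMap.nhds_le_map_toFun hdeg (sheet_subset hs').1
      (mem_map.2 (mem_of_superset hmem (subset_preimage_image _ _)))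
    rw [← heq] at this
    exact nhdsWithin_le_nhds ((X.continuousAt_toFun (sheet_subset hs).1) this)
  have h2 : ∀ᶠ t in 𝓝[≠] s, t ∈ U ∩ sheet X s₀ R :=
    nhdsWithin_le_nhds ((hU.inter isOpen_sheet).mem_nhds ⟨hsU, hs⟩)
  have h3 := eventually_nhdsNE_notMem_of_finite hpar s
  have h4 : ∀ᶠ t in 𝓝[≠] s, ∀ w ∈ Prod.fst '' {P : ℂ × ℂ | evalE E P.1 P.2 = 0 ∧
      ¬ ∃! s : ℂ, X.eval s = ((P.1 : ℂ) : OnePoint ℂ) ∧ Y.eval s = ((P.2 : ℂ) : OnePoint ℂ)},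
      X.toFun t ≠ w :=
    (eventually_all_finite (hprop.image Prod.fst)).2 fun w _ =>
      RationalMap.eventually_ne hdeg (sheet_subset hs).1 w
  obtain ⟨t, ⟨t', ⟨htU', ht'⟩, hXt⟩, ⟨htU, ht⟩, hE, hbad⟩ :=
    (h1.and (h2.and (h3.and h4))).exists
  simp only [mem_ofPred_eq, not_not] at hE
  refine hbad (X.toFun t) ⟨(X.toFun t, Y.toFun t), ⟨hE.2.2, ?_⟩, rfl⟩ rfl
  intro huniq
  have htt' : t = t' := by
    refine huniq.unique ⟨X.eval_eq_coe_iff.2 ⟨hE.1, rfl⟩, Y.eval_eq_coe_iff.2 ⟨hE.2.1, rfl⟩⟩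
      ⟨X.eval_eq_coe_iff.2 ⟨(sheet_subset ht').1, hXt⟩,
        Y.eval_eq_coe_iff.2 ⟨(hY t' ht').1, ?_⟩⟩
    rw [(hY t' ht').2, (hY t ht).2, hXt]
  exact Set.disjoint_left.1 hdisj htU (htt' ▸ htU')

end Sheet

section RealSegment

open Set Function

variable {X Y : RationalMap} {c : ℕ → ℝ} {s₀ s₁ : ℝ}

lemma ofReal_mem_sheet (hX : X.IsReal) {s R : ℝ} (hs : s₀ ≤ s)
    (hden : ∀ t ∈ Icc s₀ s, X.den.eval (t : ℂ) ≠ 0) (hX0 : X.toFun (s₀ : ℂ) = 0)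
    (hmono : MonotoneOn X.realFun (Icc s₀ s)) (hR : X.realFun s < R) :
    (s : ℂ) ∈ sheet X s₀ R := by
  have h0 : X.realFun s₀ = 0 := by simp [RationalMap.realFun, hX0]
  have hnn : ∀ t ∈ Icc s₀ s, 0 ≤ X.realFun t := fun t ht => by
    rw [← h0]; exact hmono (left_mem_Icc.2 hs) ht ht.1
  have hR0 : 0 < R := (hnn s (right_mem_Icc.2 hs)).trans_lt hR
  refine subset_sheet_of_isPreconnected (A := Complex.ofReal '' Icc s₀ s)
    (isPreconnected_Icc.image _ Complex.continuous_ofReal.continuousOn) ?_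
    ⟨s₀, mem_image_of_mem _ (left_mem_Icc.2 hs),
      self_mem_sheet (hden s₀ (left_mem_Icc.2 hs)) hX0 hR0⟩
    (mem_image_of_mem _ (right_mem_Icc.2 hs))
  rintro _ ⟨t, ht, rfl⟩
  refine ⟨hden t ht, ?_⟩
  rw [hX.toFun_ofReal, mem_ball_zero_iff, Complex.norm_real, Real.norm_of_nonneg (hnn t ht)]
  exact (hmono ht (right_mem_Icc.2 hs) ht.2).trans_lt hR

/-- The Taylor series of `Y ∘ X⁻¹` converges as far as `(X, Y)` has no critical point. -/
lemma summable_realFun (hX : X.IsReal) (hc : ∀ n, 0 ≤ c n)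
    (hden : ∀ s ∈ Ico s₀ s₁, X.den.eval (s : ℂ) ≠ 0)
    (hcrit : ∀ s ∈ Ico s₀ s₁, deriv X.toFun (s : ℂ) ≠ 0)
    (hYden : ∀ s ∈ Ico s₀ s₁, Y.den.eval (s : ℂ) ≠ 0)
    (hpos : 0 < (deriv X.toFun (s₀ : ℂ)).re) (hX0 : X.toFun (s₀ : ℂ) = 0)
    (hloc : ∀ᶠ t in 𝓝 (s₀ : ℂ), Y.den.eval t ≠ 0 ∧ Y.toFun t = powerSum c (X.toFun t))
    {r : ℝ} (hr : 0 < r) (hsmall : Summable fun n => c n * r ^ n)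
    {s : ℝ} (hs : s ∈ Ico s₀ s₁) : Summable fun n => c n * X.realFun s ^ n := by
  have hmono := hX.strictMonoOn hden hcrit hpos
  have h0 : X.realFun s₀ = 0 := by simp [RationalMap.realFun, hX0]
  have hs₀ : s₀ ∈ Ico s₀ s₁ := ⟨le_rfl, hs.1.trans_lt hs.2⟩
  have hcont : ContinuousOn X.realFun (Ico s₀ s₁) := fun s hs =>
    (X.hasDerivAt_realFun (hden s hs)).continuousAt.continuousWithinAt
  by_contra hns
  have hxs : 0 ≤ X.realFun s := by rw [← h0]; exact hmono.monotoneOn hs₀ hs hs.1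
  set S : Set ℝ := {y | 0 ≤ y ∧ Summable fun n => c n * y ^ n} with hS
  have hub : ∀ y ∈ S, y ≤ X.realFun s := by
    intro y hy
    by_contra! hlt
    exact hns (summable_mul_pow_of_le hc hxs hlt.le hy.2)
  have hbdd : BddAbove S := ⟨_, hub⟩
  have hne : S.Nonempty := ⟨r, hr.le, hsmall⟩
  have hR : 0 < sSup S := hr.trans_le (le_csSup hbdd ⟨hr.le, hsmall⟩)
  have hRs : sSup S ≤ X.realFun s := csSup_le hne hub
  set R := sSup S with hRdef
  have hsum : ∀ x, 0 ≤ x → x < R → Summable fun n => c n * x ^ n := by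
    intro x hx hxR
    obtain ⟨y, hy, hxy⟩ := exists_lt_of_lt_csSup hne hxR
    exact summable_mul_pow_of_le hc hx hxy.le hy.2
  have hIcc : Icc s₀ s ⊆ Ico s₀ s₁ := fun t ht => ⟨ht.1, ht.2.trans_lt hs.2⟩
  obtain ⟨q, hq, hqR⟩ := intermediate_value_Icc hs.1 (hcont.mono hIcc)
    ⟨by rw [h0]; exact hR.le, hRs⟩
  have hq1 := hIcc hq
  have hqs : s₀ < q := by
    refine lt_of_le_of_ne hq.1 ?_
    rintro rfl
    rw [h0] at hqR
    exact hR.ne hqR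
  have hXq : X.toFun (q : ℂ) = (R : ℂ) := by rw [hX.toFun_ofReal, hqR]
  -- a local inverse of `X` at `q`
  have hstr : HasStrictDerivAt X.toFun (deriv X.toFun (q : ℂ)) (q : ℂ) :=
    (X.analyticAt_toFun (hden q hq1)).hasStrictDerivAt
  obtain ⟨V, hV, hqV, hVden, hVY, hinj⟩ : ∃ V : Set ℂ, IsOpen V ∧ (q : ℂ) ∈ V ∧
      (∀ t ∈ V, X.den.eval t ≠ 0) ∧ (∀ t ∈ V, Y.den.eval t ≠ 0) ∧ InjOn X.toFun V := by
    let e := (hstr.hasStrictFDerivAt_equiv (hcrit q hq1)).toOpenPartialHomeomorph X.toFun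
    refine ⟨e.source ∩ ({t | X.den.eval t ≠ 0} ∩ {t | Y.den.eval t ≠ 0}),
      e.open_source.inter (X.isOpen_den_ne_zero.inter Y.isOpen_den_ne_zero),
      ⟨HasStrictFDerivAt.mem_toOpenPartialHomeomorph_source _, hden q hq1, hYden q hq1⟩,
      fun t ht => ht.2.1, fun t ht => ht.2.2, e.injOn.mono inter_subset_left⟩
  have hdiffV : DifferentiableOn ℂ X.toFun V := fun t ht =>
    (X.analyticAt_toFun (hVden t ht)).differentiableAt.differentiableWithinAt
  have hopen : ∀ t ∈ V, ∀ U ∈ 𝓝 t, X.toFun '' U ∈ 𝓝 (X.toFun t) := by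
    intro t ht U hU
    have := (X.analyticAt_toFun (hVden t ht)).eventually_constant_or_nhds_le_map_nhds.resolve_left
      (not_eventually_const_of_injOn hV hinj ht)
    exact this (mem_map.2 (mem_of_superset hU (subset_preimage_image _ _)))
  have hG : AnalyticAt ℂ (fun w => Y.toFun (invFunOn X.toFun V w)) (R : ℂ) := by
    rw [Complex.analyticAt_iff_eventually_differentiableAt, ← hXq]
    filter_upwards [hopen q hqV V (hV.mem_nhds hqV)]
    rintro _ ⟨t, ht, rfl⟩
    have hYd : DifferentiableAt ℂ Y.toFun (invFunOn X.toFun V (X.toFun t)) := by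
      rw [invFunOn_apply_of_injOn hinj ht]
      exact (Y.analyticAt_toFun (hVY t ht)).differentiableAt
    exact hYd.comp (X.toFun t) (differentiableAt_invFunOn hV hdiffV hinj ht
      (deriv_ne_zero_of_injOn hV hdiffV hinj ht))
  have hfreq : ∃ᶠ a : ℝ in 𝓝[<] R,
      (fun w => Y.toFun (invFunOn X.toFun V w)) =ᶠ[𝓝 (a : ℂ)] powerSum c := by
    have htend : Tendsto X.realFun (𝓝[<] q) (𝓝[<] R) := by
      rw [← hqR]
      refine tendsto_nhdsWithin_iff.2
        ⟨(X.hasDerivAt_realFun (hden q hq1)).continuousAt.tendsto.mono_left nhdsWithin_le_nhds, ?_⟩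
      filter_upwards [Ioo_mem_nhdsLT hqs] with t ht
      exact hmono ⟨ht.1.le, ht.2.trans hq1.2⟩ hq1 ht.2
    refine htend.frequently (Eventually.frequently ?_)
    have hcV : ∀ᶠ t : ℝ in 𝓝[<] q, (t : ℂ) ∈ V :=
      nhdsWithin_le_nhds (Complex.continuous_ofReal.continuousAt (hV.mem_nhds hqV))
    filter_upwards [Ioo_mem_nhdsLT hqs, hcV] with t ht htV
    have htI : t ∈ Ico s₀ s₁ := ⟨ht.1.le, ht.2.trans hq1.2⟩
    have hsubt : Icc s₀ t ⊆ Ico s₀ s₁ := fun u hu => ⟨hu.1, hu.2.trans_lt htI.2⟩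
    have hts : (t : ℂ) ∈ sheet X s₀ R := ofReal_mem_sheet hX ht.1.le (fun u hu => hden u (hsubt hu))
      hX0 (hmono.monotoneOn.mono hsubt) (by rw [← hqR]; exact hmono htI hq1 ht.2)
    rw [← hX.toFun_ofReal]
    filter_upwards [hopen t htV (V ∩ sheet X s₀ R) ((hV.inter isOpen_sheet).mem_nhds ⟨htV, hts⟩)]
    rintro _ ⟨u, ⟨huV, hus⟩, rfl⟩
    rw [invFunOn_apply_of_injOn hinj huV]
    exact (sheet_identity hc hsum hR (hden s₀ hs₀) hX0 hloc hus).2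
  obtain ⟨R', hR', hsumR'⟩ := exists_summable_of_analyticAt hc hR hsum hG hfreq
  exact absurd (le_csSup hbdd ⟨(hR.trans hR').le, hsumR'⟩) (not_le.2 hR')

end RealSegment

section NoPole

open Set

variable {X Y : RationalMap} {c : ℕ → ℝ} {s₀ s₁ : ℝ}

lemma le_norm_powerSum (hc : ∀ n, 0 ≤ c n) {x : ℝ} (hx : 0 ≤ x)
    (hs : Summable fun n => c n * x ^ n) (n : ℕ) : c n * x ^ n ≤ ‖powerSum c (x : ℂ)‖ := by
  have h : powerSum c (x : ℂ) = ((∑' n, c n * x ^ n : ℝ) : ℂ) := by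
    simp [powerSum, Complex.ofReal_tsum]
  have h0 : ∀ n, 0 ≤ c n * x ^ n := fun n => mul_nonneg (hc n) (pow_nonneg hx n)
  rw [h, Complex.norm_real, Real.norm_of_nonneg (tsum_nonneg h0)]
  exact hs.le_tsum n fun m _ => h0 m

/-- Before the first critical point of `(X, Y)` there is no pole of `X`. -/
lemma den_ne_zero_of_noncritical (hX : X.IsReal) (hc : ∀ n, 0 ≤ c n)
    (hnonpoly : ∀ N : ℕ, ∃ n : ℕ, N ≤ n ∧ c n ≠ 0)
    (hnc : ∀ s ∈ Ico s₀ s₁, ¬ IsCriticalPt X Y (s : ℂ))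
    (hpos : 0 < (deriv X.toFun (s₀ : ℂ)).re) (hden : X.den.eval (s₀ : ℂ) ≠ 0)
    (hX0 : X.toFun (s₀ : ℂ) = 0)
    (hloc : ∀ᶠ t in 𝓝 (s₀ : ℂ), Y.den.eval t ≠ 0 ∧ Y.toFun t = powerSum c (X.toFun t))
    {r : ℝ} (hr : 0 < r) (hsmall : Summable fun n => c n * r ^ n)
    {s : ℝ} (hs : s ∈ Ico s₀ s₁) : X.den.eval (s : ℂ) ≠ 0 := by
  intro hs0
  have hcl : IsClosed {t : ℝ | X.den.eval (t : ℂ) = 0} :=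
    isClosed_singleton.preimage (X.den.continuous.comp Complex.continuous_ofReal)
  obtain ⟨q, ⟨hqI, hq0⟩, hqle⟩ := (isCompact_Icc.inter_right hcl).exists_isLeast
    ⟨s, right_mem_Icc.2 hs.1, hs0⟩
  have hq0 : X.den.eval (q : ℂ) = 0 := hq0
  have hqs : s₀ < q := lt_of_le_of_ne hqI.1 (by rintro rfl; exact hden hq0)
  have hsub : Ico s₀ q ⊆ Ico s₀ s₁ := fun t ht => ⟨ht.1, ht.2.trans_le (hqI.2.trans hs.2.le)⟩
  have hden' : ∀ t ∈ Ico s₀ q, X.den.eval (t : ℂ) ≠ 0 := fun t ht h0 =>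
    not_le.2 ht.2 (hqle ⟨⟨ht.1, ht.2.le.trans hqI.2⟩, h0⟩)
  have hcrit : ∀ t ∈ Ico s₀ q, deriv X.toFun (t : ℂ) ≠ 0 := fun t ht =>
    (X.deriv_toFun_ne_zero_iff (hden' t ht)).2 fun h => hnc t (hsub ht) (Or.inl h)
  have hYden : ∀ t ∈ Ico s₀ q, Y.den.eval (t : ℂ) ≠ 0 := fun t ht h =>
    hnc t (hsub ht) (Or.inr h)
  have hYq : Y.den.eval (q : ℂ) ≠ 0 := fun h => hnc q ⟨hqI.1, hqI.2.trans_lt hs.2⟩ (Or.inr h)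
  have hsum : ∀ t ∈ Ico s₀ q, Summable fun n => c n * X.realFun t ^ n := fun t ht =>
    summable_realFun hX hc hden' hcrit hYden hpos hX0 hloc hr hsmall ht
  have hmono := hX.strictMonoOn hden' hcrit hpos
  have h0 : X.realFun s₀ = 0 := by simp [RationalMap.realFun, hX0]
  have hnn : ∀ t ∈ Ico s₀ q, 0 ≤ X.realFun t := fun t ht => by
    rw [← h0]; exact hmono.monotoneOn ⟨le_rfl, hqs⟩ ht ht.1
  obtain ⟨n, hn1, hcn⟩ := hnonpoly 1
  have key : ∀ t ∈ Ico s₀ q,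
      c n * ‖X.num.eval (t : ℂ)‖ ^ n ≤ ‖Y.toFun (t : ℂ)‖ * ‖X.den.eval (t : ℂ)‖ ^ n := by
    intro t ht
    obtain ⟨u, htu, huq⟩ := exists_between ht.2
    have hu : u ∈ Ico s₀ q := ⟨ht.1.trans htu.le, huq⟩
    have htu' := hmono ht hu htu
    have hsubt : Icc s₀ t ⊆ Ico s₀ q := fun v hv => ⟨hv.1, hv.2.trans_lt ht.2⟩
    have hYt := (sheet_identity hc (R := X.realFun u)
      (fun x hx hxu => summable_mul_pow_of_le hc hx hxu.le (hsum u hu))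
      ((hnn t ht).trans_lt htu') hden hX0 hloc (ofReal_mem_sheet hX ht.1
        (fun v hv => hden' v (hsubt hv)) hX0 (hmono.monotoneOn.mono hsubt) htu')).2
    have hle := le_norm_powerSum hc (hnn t ht) (hsum t ht) n
    rw [← hX.toFun_ofReal, ← hYt] at hle
    have hnorm : X.realFun t = ‖X.num.eval (t : ℂ)‖ / ‖X.den.eval (t : ℂ)‖ := by
      rw [← norm_div, ← Real.norm_of_nonneg (hnn t ht), ← Complex.norm_real, ← hX.toFun_ofReal,
        RationalMap.toFun]
    have hdpos : 0 < ‖X.den.eval (t : ℂ)‖ ^ n := pow_pos (norm_pos_iff.2 (hden' t ht)) n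
    rwa [hnorm, div_pow, ← mul_div_assoc, div_le_iff₀ hdpos] at hle
  have hofReal : Tendsto (fun t : ℝ => (t : ℂ)) (𝓝[<] q) (𝓝 (q : ℂ)) :=
    Complex.continuous_ofReal.continuousAt.tendsto.mono_left nhdsWithin_le_nhds
  have hL := (((X.num.continuous.tendsto (q : ℂ)).comp hofReal).norm.pow n).const_mul (c n)
  have hR := ((Y.continuousAt_toFun hYq).tendsto.comp hofReal).norm.mul
    (((X.den.continuous.tendsto (q : ℂ)).comp hofReal).norm.pow n)
  have hle := le_of_tendsto_of_tendsto hL hR (by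
    filter_upwards [Ioo_mem_nhdsLT hqs] with t ht using key t ⟨ht.1.le, ht.2⟩)
  rw [hq0, norm_zero, zero_pow (by lia), mul_zero] at hle
  have hcpos : 0 < c n := lt_of_le_of_ne (hc n) (Ne.symm hcn)
  exact absurd hle (not_le.2 (mul_pos hcpos (pow_pos (norm_pos_iff.2 (X.num_eval_ne_zero hq0)) n)))

end NoPole

section SlitAnnulus

open Set

variable {X : RationalMap} {a b : ℝ}

/-- The annulus `a < |w| < b` slit along the positive real axis. -/
def slitAnnulus (a b : ℝ) : Set ℂ := {w | ‖w‖ ∈ Ioo a b ∧ -w ∈ Complex.slitPlane}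

lemma isOpen_slitAnnulus : IsOpen (slitAnnulus a b) :=
  (isOpen_Ioo.preimage continuous_norm).inter (Complex.isOpen_slitPlane.preimage continuous_neg)

/-- The rectangle parametrizing a slit annulus via `ζ ↦ -exp ζ`. -/
def logRectangle (a b : ℝ) : Set ℂ := Ioo (Real.log a) (Real.log b) ×ℂ Ioo (-Real.pi) Real.pi

lemma isOpen_logRectangle : IsOpen (logRectangle a b) := isOpen_Ioo.reProdIm isOpen_Ioo

lemma convex_logRectangle : Convex ℝ (logRectangle a b) :=
  ((convex_Ioo _ _).linear_preimage Complex.reLm).inter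
    ((convex_Ioo _ _).linear_preimage Complex.imLm)

lemma neg_exp_mem_slitAnnulus (ha : 0 < a) (hb : 0 < b) {ζ : ℂ} (hζ : ζ ∈ logRectangle a b) :
    -Complex.exp ζ ∈ slitAnnulus a b := by
  obtain ⟨⟨h1, h2⟩, h3, h4⟩ := hζ
  refine ⟨?_, ?_⟩
  · rw [norm_neg, Complex.norm_exp]
    exact ⟨(Real.log_lt_iff_lt_exp ha).1 h1, (Real.lt_log_iff_exp_lt hb).1 h2⟩
  · rw [neg_neg, Complex.mem_slitPlane_iff_arg, ← Complex.log_im, Complex.log_exp h3 h4.le]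
    exact ⟨h4.ne, Complex.exp_ne_zero ζ⟩

lemma log_neg_mem_logRectangle (ha : 0 < a) {w : ℂ} (hw : w ∈ slitAnnulus a b) :
    Complex.log (-w) ∈ logRectangle a b := by
  obtain ⟨⟨h1, h2⟩, h3⟩ := hw
  refine ⟨?_, ?_⟩
  · rw [mem_preimage, Complex.log_re, norm_neg]
    exact ⟨Real.log_lt_log ha h1, Real.log_lt_log (ha.trans h1) h2⟩
  · rw [mem_preimage, Complex.log_im]
    exact ⟨Complex.neg_pi_lt_arg _, lt_of_le_of_ne (Complex.arg_le_pi _)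
      (Complex.mem_slitPlane_iff_arg.1 h3).1⟩

lemma neg_exp_log_neg {w : ℂ} (hw : w ∈ slitAnnulus a b) : -Complex.exp (Complex.log (-w)) = w := by
  rw [Complex.exp_log (Complex.slitPlane_ne_zero hw.2), neg_neg]

lemma isPreconnected_slitAnnulus (ha : 0 < a) (hb : 0 < b) :
    IsPreconnected (slitAnnulus a b) := by
  have h : slitAnnulus a b = (fun ζ => -Complex.exp ζ) '' logRectangle a b :=
    Subset.antisymm (fun w hw => ⟨_, log_neg_mem_logRectangle ha hw, neg_exp_log_neg hw⟩)
      (image_subset_iff.2 fun ζ hζ => neg_exp_mem_slitAnnulus ha hb hζ)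
  rw [h]
  exact convex_logRectangle.isPreconnected.image _ (by fun_prop)

/-- A rational map without critical values in a slit annulus has a continuous section there through
any prescribed point. -/
lemma exists_section_slitAnnulus (hdeg : X.den.degree < X.num.degree) (ha : 0 < a) (hb : 0 < b)
    (hcrit : ∀ s, X.den.eval s ≠ 0 → X.toFun s ∈ slitAnnulus a b → deriv X.toFun s ≠ 0)
    {e : ℂ} (he : X.den.eval e ≠ 0) (heA : X.toFun e ∈ slitAnnulus a b) :
    ∃ σ : ℂ → ℂ, ContinuousOn σ (slitAnnulus a b) ∧
      (∀ w ∈ slitAnnulus a b, X.den.eval (σ w) ≠ 0 ∧ X.toFun (σ w) = w) ∧ σ (X.toFun e) = e := by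
  let ζ₀ : logRectangle a b := ⟨_, log_neg_mem_logRectangle ha heA⟩
  have : ContractibleSpace (logRectangle a b) := convex_logRectangle.contractibleSpace ⟨ζ₀, ζ₀.2⟩
  have : LocallyPathConnectedSpace (logRectangle a b) :=
    isOpen_logRectangle.locallyPathConnectedSpace
  let f : C(logRectangle a b, ℂ) := ⟨fun ζ => -Complex.exp ζ, by fun_prop⟩
  obtain ⟨F, ⟨hF0, hF⟩, -⟩ :=
    (RationalMap.isCoveringMapOn_restrict hdeg).existsUnique_continuousMap_lifts f (a₀ := ζ₀)
      (e₀ := ⟨e, he⟩) (neg_exp_log_neg heA).symm fun ζ s hs hsw =>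
        hcrit s hs (by rw [hsw]; exact neg_exp_mem_slitAnnulus ha hb ζ.2)
  classical
  let σ : ℂ → ℂ := fun w =>
    if h : Complex.log (-w) ∈ logRectangle a b then (F ⟨_, h⟩ : ℂ) else 0
  have hσ : ∀ w (hw : w ∈ slitAnnulus a b), σ w = F ⟨_, log_neg_mem_logRectangle ha hw⟩ :=
    fun w hw => dif_pos (log_neg_mem_logRectangle ha hw)
  refine ⟨σ, ?_, fun w hw => ?_, ?_⟩
  · rw [continuousOn_iff_continuous_domRestrict]
    have hr : (slitAnnulus a b).domRestrict σ =
        fun w => (F ⟨_, log_neg_mem_logRectangle ha w.2⟩ : ℂ) := funext fun w => hσ w w.2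
    rw [hr]
    refine continuous_subtype_val.comp (F.continuous.comp (Continuous.subtype_mk ?_ _))
    exact continuous_iff_continuousAt.2 fun w =>
      ContinuousAt.clog (by fun_prop) w.2.2
  · rw [hσ w hw]
    refine ⟨(F _).2, ?_⟩
    have h := congrFun hF ⟨_, log_neg_mem_logRectangle ha hw⟩
    exact h.trans (neg_exp_log_neg hw)
  · rw [hσ _ heA]
    exact congrArg Subtype.val hF0

/-- The image of a continuous section over a slit annulus is open. -/
lemma isOpen_image_section {σ : ℂ → ℂ} (hσ : ContinuousOn σ (slitAnnulus a b))
    (hX : ∀ w ∈ slitAnnulus a b, X.den.eval (σ w) ≠ 0 ∧ X.toFun (σ w) = w)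
    (hcrit : ∀ s, X.den.eval s ≠ 0 → X.toFun s ∈ slitAnnulus a b → deriv X.toFun s ≠ 0) :
    IsOpen (σ '' slitAnnulus a b) := by
  rw [isOpen_iff_mem_nhds]
  rintro _ ⟨w, hw, rfl⟩
  obtain ⟨hden, hXw⟩ := hX w hw
  have hstr := (X.analyticAt_toFun hden).hasStrictDerivAt
  have hd := hcrit _ hden (by rwa [hXw])
  let e := (hstr.hasStrictFDerivAt_equiv hd).toOpenPartialHomeomorph X.toFun
  have hmem : e.source ∈ 𝓝 (σ w) :=
    e.open_source.mem_nhds (HasStrictFDerivAt.mem_toOpenPartialHomeomorph_source _)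
  have hXc : Tendsto X.toFun (𝓝 (σ w)) (𝓝 w) := by
    simpa [hXw] using (X.continuousAt_toFun hden).tendsto
  have hA := isOpen_slitAnnulus.mem_nhds hw
  filter_upwards [hmem, hXc hA, hXc (hσ.continuousAt hA hmem)] with s hs hsA hs'
  exact ⟨X.toFun s, hsA, e.injOn hs' hs (hX _ hsA).2⟩

lemma slitDisk_eq {x ε : ℝ} (hx : 0 < x) (hε : 0 < ε) :
    slitDisk x ε = ball 0 x ∪ slitAnnulus (x - ε) (x + ε) := by
  ext w
  have key : -w ∈ Complex.slitPlane ↔ ¬ (0 ≤ w.re ∧ w.im = 0) := by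
    rw [Complex.mem_slitPlane_iff, Complex.neg_re, Complex.neg_im, neg_pos, neg_ne_zero]
    rw [not_and_or, not_le]
  have hslit : w ∈ Complex.ofReal '' Icc x (x + ε) ↔
      0 ≤ w.re ∧ w.im = 0 ∧ ‖w‖ ∈ Icc x (x + ε) := by
    constructor
    · rintro ⟨y, hy, rfl⟩
      have hy0 : 0 ≤ y := hx.le.trans hy.1
      simpa [abs_of_nonneg hy0, hy0] using hy
    · rintro ⟨h1, h2, h3⟩
      have hw : w = (w.re : ℂ) := Complex.ext rfl (by simpa using h2)
      refine ⟨w.re, ?_, hw.symm⟩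
      rwa [hw, Complex.norm_real, Real.norm_of_nonneg h1] at h3
  rw [slitDisk, Set.mem_sdiff, hslit, mem_union, mem_ball_zero_iff, mem_ball_zero_iff, slitAnnulus,
    mem_ofPred_eq, key]
  constructor
  · rintro ⟨h1, h2⟩
    rcases lt_or_ge ‖w‖ x with h | h
    · exact Or.inl h
    · exact Or.inr ⟨⟨by linarith, h1⟩, fun h3 => h2 ⟨h3.1, h3.2, h, h1.le⟩⟩
  · rintro (h | ⟨⟨-, h2⟩, h3⟩)
    · exact ⟨by linarith, fun h1 => not_le.2 h h1.2.2.1⟩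
    · exact ⟨h2, fun h1 => h3 ⟨h1.1, h1.2.1⟩⟩

lemma isOpen_slitDisk {x ε : ℝ} : IsOpen (slitDisk x ε) :=
  isOpen_ball.sdiff (isCompact_Icc.image Complex.continuous_ofReal).isClosed

end SlitAnnulus

section Assembly

open Set Function

variable {X Y : RationalMap}

lemma finite_isCriticalPt (hdeg : X.den.degree < X.num.degree) :
    {s : ℂ | IsCriticalPt X Y s}.Finite := by
  refine ((Polynomial.finite_setOfPred_isRoot (RationalMap.wronskian_ne_zero hdeg)).union
    (Polynomial.finite_setOfPred_isRoot Y.den_ne_zero)).subset ?_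
  rintro s (h | h)
  · exact Or.inl h
  · exact Or.inr h

/-- The absolute values of `X` at critical points other than `x` keep a positive distance from
`x`. -/
lemma exists_margin (hdeg : X.den.degree < X.num.degree) {x : ℝ} (hx : 0 < x) :
    ∃ ε, 0 < ε ∧ ε < x ∧
      ∀ s, IsCriticalPt X Y s → ‖X.toFun s‖ ∈ Ioo (x - ε) (x + ε) → ‖X.toFun s‖ = x := by
  have h : ∀ᶠ ε in 𝓝[>] (0 : ℝ), ∀ s ∈ {s : ℂ | IsCriticalPt X Y s},
      ‖X.toFun s‖ ∈ Ioo (x - ε) (x + ε) → ‖X.toFun s‖ = x := by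
    refine (eventually_all_finite (finite_isCriticalPt hdeg)).2 fun s _ => ?_
    by_cases hs : ‖X.toFun s‖ = x
    · exact .of_forall fun _ _ => hs
    · filter_upwards [Ioo_mem_nhdsGT (abs_pos.2 (sub_ne_zero.2 hs))] with ε hε hmem
      exact absurd hε.2 (not_lt.2 (abs_lt.2 ⟨by linarith [hmem.1], by linarith [hmem.2]⟩).le)
  obtain ⟨ε, h1, h2⟩ := (h.and (Ioo_mem_nhdsGT hx)).exists
  exact ⟨ε, h2.1, h2.2, h1⟩

/-- A sheet over a disk on which `X` is injective extends over a slit annulus overlapping the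
disk. -/
lemma exists_bijOn_slitDisk {s₀ x ε : ℝ} (hdeg : X.den.degree < X.num.degree)
    (hden : X.den.eval (s₀ : ℂ) ≠ 0) (hX0 : X.toFun (s₀ : ℂ) = 0) (hε : 0 < ε) (hεx : ε < x)
    (hinj : InjOn X.toFun (sheet X s₀ x))
    (hcrit : ∀ s, X.den.eval s ≠ 0 → X.toFun s ∈ slitAnnulus (x - ε) (x + ε) →
      deriv X.toFun s ≠ 0) :
    ∃ V, IsOpen V ∧ sheet X s₀ x ⊆ V ∧ (∀ s ∈ V, X.den.eval s ≠ 0) ∧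
      (∀ s ∈ V, s ∈ sheet X s₀ x ∨ X.toFun s ∈ slitAnnulus (x - ε) (x + ε)) ∧
      BijOn X.toFun V (slitDisk x ε) := by
  have hx : 0 < x := hε.trans hεx
  have ha : 0 < x - ε := by linarith
  have himg := image_sheet hdeg hx hden hX0
  have hw₀ : -((x - ε / 2 : ℝ) : ℂ) ∈ slitAnnulus (x - ε) x := by
    have hpos : 0 < x - ε / 2 := by linarith
    refine ⟨?_, ?_⟩
    · rw [norm_neg, Complex.norm_real, Real.norm_of_nonneg hpos.le]
      exact ⟨by linarith, by linarith⟩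
    · rw [neg_neg]
      exact Complex.ofReal_mem_slitPlane.2 hpos
  have hsub : slitAnnulus (x - ε) x ⊆ slitAnnulus (x - ε) (x + ε) := fun w hw =>
    ⟨⟨hw.1.1, hw.1.2.trans (by linarith)⟩, hw.2⟩
  obtain ⟨e, he, hew⟩ : -((x - ε / 2 : ℝ) : ℂ) ∈ X.toFun '' sheet X s₀ x := by
    rw [himg, mem_ball_zero_iff]
    exact hw₀.1.2
  obtain ⟨σ, hσc, hσ, hσe⟩ := exists_section_slitAnnulus hdeg ha (by linarith : 0 < x + ε) hcrit
    (sheet_subset he).1 (by rw [hew]; exact hsub hw₀)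
  have hσW : σ '' slitAnnulus (x - ε) x ⊆ sheet X s₀ x := by
    refine subset_sheet_of_isPreconnected
      ((isPreconnected_slitAnnulus ha hx).image _ (hσc.mono hsub)) ?_
      ⟨e, ⟨_, hw₀, by rw [← hew, hσe]⟩, he⟩
    rintro _ ⟨w, hw, rfl⟩
    refine ⟨(hσ w (hsub hw)).1, ?_⟩
    rw [(hσ w (hsub hw)).2, mem_ball_zero_iff]
    exact hw.1.2
  set T := σ '' slitAnnulus (x - ε) (x + ε) with hT
  have hball : ∀ s ∈ sheet X s₀ x ∪ T, X.toFun s ∈ ball 0 x → s ∈ sheet X s₀ x := by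
    rintro s (hs | ⟨w, hw, rfl⟩) hsb
    · exact hs
    · rw [(hσ w hw).2, mem_ball_zero_iff] at hsb
      exact hσW ⟨w, ⟨⟨hw.1.1, hsb⟩, hw.2⟩, rfl⟩
  have hann : ∀ s ∈ sheet X s₀ x ∪ T, X.toFun s ∈ slitAnnulus (x - ε) (x + ε) →
      σ (X.toFun s) = s := by
    rintro s (hs | ⟨w, hw, rfl⟩) hsA
    · have hlt := mem_ball_zero_iff.1 (sheet_subset hs).2
      exact hinj (hσW ⟨_, ⟨⟨hsA.1.1, hlt⟩, hsA.2⟩, rfl⟩) hs (hσ _ hsA).2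
    · rw [(hσ w hw).2]
  have hmaps : MapsTo X.toFun (sheet X s₀ x ∪ T) (slitDisk x ε) := by
    rw [slitDisk_eq hx hε]
    rintro s (hs | ⟨w, hw, rfl⟩)
    · exact Or.inl (sheet_subset hs).2
    · rw [(hσ w hw).2]
      exact Or.inr hw
  refine ⟨sheet X s₀ x ∪ T, isOpen_sheet.union (isOpen_image_section hσc hσ hcrit),
    subset_union_left, ?_, ?_, hmaps, ?_, ?_⟩
  · rintro s (hs | ⟨w, hw, rfl⟩)
    · exact (sheet_subset hs).1
    · exact (hσ w hw).1
  · rintro s (hs | ⟨w, hw, rfl⟩)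
    · exact Or.inl hs
    · rw [(hσ w hw).2]
      exact Or.inr hw
  · intro s hs s' hs' heq
    have h := hmaps hs
    rw [slitDisk_eq hx hε] at h
    rcases h with h | h
    · exact hinj (hball s hs h) (hball s' hs' (heq ▸ h)) heq
    · rw [← hann s hs h, ← hann s' hs' (heq ▸ h), heq]
  · rw [slitDisk_eq hx hε]
    rintro w (hw | hw)
    · rw [← himg] at hw
      obtain ⟨s, hs, rfl⟩ := hw
      exact ⟨s, Or.inl hs, rfl⟩
    · exact ⟨σ w, Or.inr ⟨w, hw, rfl⟩, (hσ w hw).2⟩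

end Assembly

/-- Proposition `RP dom sing` (iii): in the setting of the previous
proposition, if `s_c` is the only critical point `s` of `P` with `|X(s)| = x_c`, then
there is an open neighborhood `V` of `s₀` with `s_c ∈ ∂V` and `ε > 0` such that `X`
restricted to `V` is a conformal bijection onto the slit disk at `x_c` of margin `ε`,
and `φ` admits an analytic continuation to this slit disk. -/
theorem statement18 (E : MvPolynomial (Fin 2) ℂ) (hE : Irreducible E)
    (X Y : RationalMap) (hpar : IsParametrization E X Y) (hprop : IsProper E X Y)
    (hreal_X : X.IsReal) (hreal_Y : Y.IsReal)
    (hXinf : X.evalInf = OnePoint.infty)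
    (φ : ℂ → ℂ) (c : ℕ → ℝ) (r : ℝ) (hr : 0 < r)
    (hc : ∀ x : ℂ, ‖x‖ < r → HasSum (fun n : ℕ => (c n : ℂ) * x ^ n) (φ x))
    (hc_nonneg : ∀ n, 0 ≤ c n)
    (hnonpoly : ∀ N : ℕ, ∃ n : ℕ, N ≤ n ∧ c n ≠ 0)
    (heq : ∀ᶠ x in nhds (0 : ℂ), evalE E x (φ x) = 0)
    -- `s₀` parametrizes `φ` locally at `0`, with positive real derivative
    (s₀ : ℝ)
    (hs₀ : X.eval ((s₀ : ℝ) : ℂ) = ((0 : ℂ) : OnePoint ℂ) ∧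
      ∀ᶠ t in nhds ((s₀ : ℝ) : ℂ), Y.eval t = ((φ (X.toFun t) : ℂ) : OnePoint ℂ))
    (hderiv : ∃ d : ℝ, deriv X.toFun ((s₀ : ℝ) : ℂ) = (d : ℂ) ∧ 0 < d)
    -- `s_c = inf{s ≥ s₀ : s critical}` and `x_c = X(s_c)`
    (sc : ℝ) (hsc : IsLeast {s : ℝ | s₀ ≤ s ∧ IsCriticalPt X Y ((s : ℝ) : ℂ)} sc)
    (xc : ℝ) (hxc : X.toFun ((sc : ℝ) : ℂ) = (xc : ℂ)) (hxc_pos : 0 < xc)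
    -- `s_c` is the only critical point on the circle `|X(s)| = x_c`
    (huniq : ∀ s : ℂ, IsCriticalPt X Y s → X.den.eval s ≠ 0 → ‖X.toFun s‖ = xc →
      s = ((sc : ℝ) : ℂ)) :
    ∃ (V : Set ℂ) (ε : ℝ), IsOpen V ∧ ((s₀ : ℝ) : ℂ) ∈ V ∧ ((sc : ℝ) : ℂ) ∈ frontier V ∧
      0 < ε ∧
      Set.BijOn X.toFun V (slitDisk xc ε) ∧
      (∀ s ∈ V, AnalyticAt ℂ X.toFun s ∧ deriv X.toFun s ≠ 0) ∧
      ∃ g : ℂ → ℂ, (∀ w ∈ slitDisk xc ε, AnalyticAt ℂ g w) ∧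
        (∀ᶠ x in nhds (0 : ℂ), g x = φ x) := by
  have hdeg := X.degree_lt_of_evalInf hXinf
  obtain ⟨hden0, hX0⟩ := X.eval_eq_coe_iff.1 hs₀.1
  obtain ⟨d, hd, hdpos⟩ := hderiv
  have hpos : 0 < (deriv X.toFun (s₀ : ℂ)).re := by rwa [hd, Complex.ofReal_re]
  have hsmall : Summable fun n => c n * (r / 2) ^ n := by
    have h := (hc ((r / 2 : ℝ) : ℂ) (by
      rw [Complex.norm_real, Real.norm_of_nonneg (by positivity)]; linarith)).summable
    exact_mod_cast h
  have hloc : ∀ᶠ t in 𝓝 (s₀ : ℂ), Y.den.eval t ≠ 0 ∧ Y.toFun t = powerSum c (X.toFun t) := by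
    have hball : ∀ᶠ t in 𝓝 (s₀ : ℂ), X.toFun t ∈ ball 0 r :=
      X.continuousAt_toFun hden0 (by rw [hX0]; exact ball_mem_nhds 0 hr)
    filter_upwards [hs₀.2, hball] with t ht htr
    obtain ⟨h1, h2⟩ := Y.eval_eq_coe_iff.1 ht
    exact ⟨h1, h2.trans (hc _ (mem_ball_zero_iff.1 htr)).tsum_eq.symm⟩
  have hs₀sc : s₀ < sc := by
    refine lt_of_le_of_ne hsc.1.1 ?_
    rintro rfl
    rcases hsc.1.2 with h | h
    · refine (X.deriv_toFun_ne_zero_iff hden0).1 ?_ h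
      rw [hd]
      exact_mod_cast hdpos.ne'
    · exact hloc.self_of_nhds.1 h
  have hnc : ∀ s ∈ Set.Ico s₀ sc, ¬ IsCriticalPt X Y (s : ℂ) := fun s hs h =>
    not_le.2 hs.2 (hsc.2 ⟨hs.1, h⟩)
  have hden : ∀ s ∈ Set.Ico s₀ sc, X.den.eval (s : ℂ) ≠ 0 := fun s hs =>
    den_ne_zero_of_noncritical hreal_X hc_nonneg hnonpoly hnc hpos hden0 hX0 hloc (half_pos hr)
      hsmall hs
  have hcrit : ∀ s ∈ Set.Ico s₀ sc, deriv X.toFun (s : ℂ) ≠ 0 := fun s hs =>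
    (X.deriv_toFun_ne_zero_iff (hden s hs)).2 fun h => hnc s hs (Or.inl h)
  have hmono := hreal_X.strictMonoOn hden hcrit hpos
  have hdensc : X.den.eval (sc : ℂ) ≠ 0 := fun h => by
    rw [RationalMap.toFun, h, div_zero] at hxc
    exact hxc_pos.ne (by exact_mod_cast hxc)
  have hlim : Tendsto X.realFun (𝓝[<] sc) (𝓝 xc) := by
    have h : X.realFun sc = xc := by rw [RationalMap.realFun, hxc, Complex.ofReal_re]
    rw [← h]
    exact (X.hasDerivAt_realFun hdensc).continuousAt.tendsto.mono_left nhdsWithin_le_nhds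
  have hlt : ∀ s ∈ Set.Ico s₀ sc, X.realFun s < xc := fun s hs => by
    obtain ⟨t, hst, htsc⟩ := exists_between hs.2
    have ht : t ∈ Set.Ico s₀ sc := ⟨hs.1.trans hst.le, htsc⟩
    refine (hmono hs ht hst).trans_le (ge_of_tendsto hlim ?_)
    filter_upwards [Ioo_mem_nhdsLT htsc] with u hu
    exact hmono.monotoneOn ht ⟨ht.1.trans hu.1.le, hu.2⟩ hu.1.le
  have hsum : ∀ x, 0 ≤ x → x < xc → Summable fun n => c n * x ^ n := fun x hx hxxc => by
    obtain ⟨s, hs1, hs2⟩ := ((hlim.eventually_const_lt hxxc).and (Ioo_mem_nhdsLT hs₀sc)).exists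
    exact summable_mul_pow_of_le hc_nonneg hx hs1.le (summable_realFun hreal_X hc_nonneg hden hcrit
      (fun t ht h => hnc t ht (Or.inr h)) hpos hX0 hloc (half_pos hr) hsmall ⟨hs2.1.le, hs2.2⟩)
  have hident : ∀ t ∈ sheet X s₀ xc, Y.den.eval t ≠ 0 ∧ Y.toFun t = powerSum c (X.toFun t) :=
    fun t ht => sheet_identity hc_nonneg hsum hxc_pos hden0 hX0 hloc ht
  obtain ⟨ε, hε, hεxc, hmargin⟩ := exists_margin (Y := Y) hdeg hxc_pos
  have hann : ∀ s, X.den.eval s ≠ 0 → X.toFun s ∈ slitAnnulus (xc - ε) (xc + ε) →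
      ¬ IsCriticalPt X Y s := fun s hs hsA hsc' => by
    have h := huniq s hsc' hs (hmargin s hsc' hsA.1)
    have h2 := hsA.2
    rw [h, hxc, ← Complex.ofReal_neg, Complex.ofReal_mem_slitPlane] at h2
    linarith
  obtain ⟨V, hV, hWV, hVden, hVcases, hbij⟩ := exists_bijOn_slitDisk hdeg hden0 hX0 hε hεxc
    (injOn_sheet hpar hprop hdeg hident) fun s hs hsA =>
      (X.deriv_toFun_ne_zero_iff hs).2 fun h => hann s hs hsA (Or.inl h)
  have hdiff : DifferentiableOn ℂ X.toFun V := X.differentiableOn_toFun.mono hVden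
  have hderivV : ∀ s ∈ V, deriv X.toFun s ≠ 0 := fun s hs =>
    deriv_ne_zero_of_injOn hV hdiff hbij.injOn hs
  have hVY : ∀ s ∈ V, Y.den.eval s ≠ 0 := fun s hs => (hVcases s hs).elim
    (fun h => (hident s h).1) fun h h' => hann s (hVden s hs) h (Or.inr h')
  have hs₀V : (s₀ : ℂ) ∈ V := hWV (self_mem_sheet hden0 hX0 hxc_pos)
  have hdiffinv : ∀ s ∈ V, DifferentiableAt ℂ (Function.invFunOn X.toFun V) (X.toFun s) :=
    fun s hs => differentiableAt_invFunOn hV hdiff hbij.injOn hs (hderivV s hs)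
  refine ⟨V, ε, hV, hs₀V, ?_, hε, hbij,
    fun s hs => ⟨X.analyticAt_toFun (hVden s hs), hderivV s hs⟩,
    fun w => Y.toFun (Function.invFunOn X.toFun V w), ?_, ?_⟩
  · rw [hV.frontier_eq]
    refine ⟨mem_closure_of_tendsto (f := fun s : ℝ => (s : ℂ)) (b := 𝓝[<] sc)
      (Complex.continuous_ofReal.continuousAt.tendsto.mono_left nhdsWithin_le_nhds) ?_, fun h => ?_⟩
    · filter_upwards [Ioo_mem_nhdsLT hs₀sc] with s hs
      have hsub : Set.Icc s₀ s ⊆ Set.Ico s₀ sc := fun t ht => ⟨ht.1, ht.2.trans_lt hs.2⟩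
      exact hWV (ofReal_mem_sheet hreal_X hs.1.le (fun t ht => hden t (hsub ht)) hX0
        (hmono.monotoneOn.mono hsub) (hlt s ⟨hs.1.le, hs.2⟩))
    · have h2 := hbij.mapsTo h
      rw [hxc] at h2
      exact h2.2 ⟨xc, ⟨le_rfl, by linarith⟩, rfl⟩
  · intro w hw
    rw [Complex.analyticAt_iff_eventually_differentiableAt]
    filter_upwards [isOpen_slitDisk.mem_nhds hw] with z hz
    obtain ⟨s, hs, rfl⟩ := hbij.surjOn hz
    have hYd : DifferentiableAt ℂ Y.toFun (Function.invFunOn X.toFun V (X.toFun s)) := by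
      rw [invFunOn_apply_of_injOn hbij.injOn hs]
      exact (Y.analyticAt_toFun (hVY s hs)).differentiableAt
    exact hYd.comp (X.toFun s) (hdiffinv s hs)
  · have htend := (hdiffinv _ hs₀V).continuousAt.tendsto
    rw [invFunOn_apply_of_injOn hbij.injOn hs₀V, hX0] at htend
    have h0 : slitDisk xc ε ∈ 𝓝 (0 : ℂ) :=
      isOpen_slitDisk.mem_nhds (by have h := hbij.mapsTo hs₀V; rwa [hX0] at h)
    filter_upwards [htend.eventually hs₀.2, h0] with x hx hxD
    rw [(Y.eval_eq_coe_iff.1 hx).2, Function.invFunOn_eq (hbij.surjOn hxD)]
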